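/- arXiv:2602.13531 — 2 statements merged into one kernel-verified Lean document; each statement's English description precedes it below -/
import Mathlib

section
/- Define μ := λ^w·Δ_w + (1−λ)·λ^i·Δ_i + (1−λ)·Σ_{k=i+1}^{w−1} λ^k·Δ_k. If moreover s > 0 and λ < s/(√2 + s), then ‖μ‖ > 0, i.e., μ ≠ 0. -/
theorem geom_aux (lam : ℝ) (i m : ℕ) (h : i ≤ m) :
    (1 - lam) * ∑ k ∈ Finset.Icc (i + 1) m, lam ^ k = lam ^ (i + 1) - lam ^ (m + 1) := by
  induction m, h using Nat.le_induction with
  | base => simp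
  | succ n hn ih =>
    rw [Finset.sum_Icc_succ_top (by omega), mul_add, ih]
    ring

/-- Existence of a contraction-parameter witness: under the bounds
`‖Δw‖ ≤ 2√2`, `‖Δ k‖ ≤ 2√2` for `i+1 ≤ k ≤ w−1`, `‖Δ i‖ ≥ 2s` with `s > 0`, if
`λ < s/(√2 + s)` then `μ = λ^w Δ_w + (1−λ)λ^i Δ_i + (1−λ) Σ_{k=i+1}^{w−1} λ^k Δ_k`
is nonzero (equivalently `‖μ‖ > 0`). -/
theorem stmt3 {E : Type*} [NormedAddCommGroup E] [NormedSpace ℝ E]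
    (lam : ℝ) (hlam0 : 0 < lam) (hlam1 : lam < 1)
    (w i : ℕ) (hw : 1 ≤ w) (hi : i ≤ w - 1)
    (s : ℝ) (hs : 0 < s)
    (Δw : E) (Δ : ℕ → E)
    (hΔw : ‖Δw‖ ≤ 2 * Real.sqrt 2)
    (hΔk : ∀ k, i + 1 ≤ k → k ≤ w - 1 → ‖Δ k‖ ≤ 2 * Real.sqrt 2)
    (hΔi : 2 * s ≤ ‖Δ i‖)
    (hlams : lam < s / (Real.sqrt 2 + s))
    (μ : E)
    (hμ : μ = lam ^ w • Δw + ((1 - lam) * lam ^ i) • Δ i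
      + (1 - lam) • ∑ k ∈ Finset.Icc (i + 1) (w - 1), lam ^ k • Δ k) :
    0 < ‖μ‖ ∧ μ ≠ 0 := by
  obtain ⟨m, rfl⟩ : ∃ m, w = m + 1 := ⟨w - 1, by omega⟩
  simp only [Nat.add_sub_cancel] at hi hΔk hμ
  have hg := geom_aux lam i m hi
  have h2 : 0 < Real.sqrt 2 := by positivity
  have h1 : 0 < 1 - lam := by linarith
  have hpi : 0 < lam ^ i := by positivity
  rw [lt_div_iff₀ (by positivity)] at hlams
  suffices hne : μ ≠ 0 from ⟨norm_pos_iff.mpr hne, hne⟩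
  intro h0
  rw [h0] at hμ
  set S := ∑ k ∈ Finset.Icc (i + 1) m, lam ^ k • Δ k with hS
  have hSn : ‖S‖ ≤ (∑ k ∈ Finset.Icc (i + 1) m, lam ^ k) * (2 * Real.sqrt 2) := by
    rw [Finset.sum_mul]
    refine norm_sum_le_of_le _ fun k hk => ?_
    rw [Finset.mem_Icc] at hk
    rw [norm_smul, Real.norm_of_nonneg (by positivity)]
    exact mul_le_mul_of_nonneg_left (hΔk k hk.1 hk.2) (by positivity)
  have e : ((1 - lam) * lam ^ i) • Δ i = -(lam ^ (m + 1) • Δw + (1 - lam) • S) := by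
    rw [eq_neg_iff_add_eq_zero, hμ]
    abel
  have e2 := congrArg norm e
  rw [norm_neg, norm_smul, Real.norm_of_nonneg (by positivity)] at e2
  have e3 := norm_add_le (lam ^ (m + 1) • Δw) ((1 - lam) • S)
  rw [norm_smul, norm_smul, Real.norm_of_nonneg (by positivity : 0 ≤ lam ^ (m + 1)),
    Real.norm_of_nonneg h1.le] at e3
  have a1 := mul_le_mul_of_nonneg_left hΔw (by positivity : 0 ≤ lam ^ (m + 1))
  have a2 := mul_le_mul_of_nonneg_left hSn h1.le
  rw [← mul_assoc, hg] at a2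
  have a3 := mul_le_mul_of_nonneg_left hΔi (by positivity : 0 ≤ (1 - lam) * lam ^ i)
  have a4 := mul_lt_mul_of_pos_left hlams hpi
  rw [pow_succ lam i] at a2
  linarith
end

section
/- Assume the Gram matrix K is positive definite and y ≠ 0, and set Λ* := √(yᵀ K⁻¹ y) > 0. Then for every Λ with 0 ≤ Λ ≤ Λ*, there exists h ∈ H with ‖h‖ ≤ Λ such that (1/N)·Σ_{j=1}^N (⟨h, φ_j⟩ − y_j)² = (1 − Λ/Λ*)²·(1/N)·Σ_{j=1}^N y_j². In particular, the infimum of the empirical squared risk (1/N)·Σ_j (⟨h, φ_j⟩ − y_j)² over the ball {h ∈ H : ‖h‖ ≤ Λ} is at most (1 − Λ/Λ*)²·(1/N)·Σ_j y_j². -/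
open Matrix
open scoped RealInnerProductSpace

/-- Effective learning: if the Gram matrix `K i j = ⟪φ i, φ j⟫` is
positive definite and `y ≠ 0`, then `Λ* = √(yᵀ K⁻¹ y) > 0` and for every
`0 ≤ Λ ≤ Λ*` there exists `h` in the ball of radius `Λ` whose empirical squared risk
equals `(1 − Λ/Λ*)²·(1/N)·Σ_j y_j²`; in particular the infimum of the empirical
squared risk over the ball is at most that value. -/
theorem stmt7 {H : Type*} [NormedAddCommGroup H] [InnerProductSpace ℝ H]
    (N : ℕ) (hN : 1 ≤ N) (φ : Fin N → H)
    (K : Matrix (Fin N) (Fin N) ℝ)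
    (hK : ∀ i j, K i j = ⟪φ i, φ j⟫)
    (y : Fin N → ℝ) (hy : y ≠ 0) (hKpd : K.PosDef)
    (Λstar : ℝ) (hΛstar : Λstar = Real.sqrt (y ⬝ᵥ K⁻¹.mulVec y)) :
    0 < Λstar ∧
    ∀ Λ : ℝ, 0 ≤ Λ → Λ ≤ Λstar →
      (∃ h : H, ‖h‖ ≤ Λ ∧
        (1 / N : ℝ) * ∑ j, (⟪h, φ j⟫ - y j) ^ 2
          = (1 - Λ / Λstar) ^ 2 * ((1 / N : ℝ) * ∑ j, (y j) ^ 2)) ∧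
      sInf {r : ℝ | ∃ h : H, ‖h‖ ≤ Λ ∧
          r = (1 / N : ℝ) * ∑ j, (⟪h, φ j⟫ - y j) ^ 2}
        ≤ (1 - Λ / Λstar) ^ 2 * ((1 / N : ℝ) * ∑ j, (y j) ^ 2) := by
  obtain ⟨c, hc⟩ : ∃ c, c = K⁻¹.mulVec y := ⟨_, rfl⟩
  rw [← hc] at hΛstar
  have hKc : K.mulVec c = y := by
    rw [hc, Matrix.mulVec_mulVec, Matrix.mul_nonsing_inv _ ((Matrix.isUnit_iff_isUnit_det K).1 hKpd.isUnit),
      Matrix.one_mulVec]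
  obtain ⟨g, hg⟩ : ∃ g : H, g = ∑ i, c i • φ i := ⟨_, rfl⟩
  have hgφ : ∀ j, ⟪g, φ j⟫ = y j := by
    intro j
    rw [← hKc, hg, sum_inner]
    simp only [Matrix.mulVec, dotProduct, real_inner_smul_left]
    refine Finset.sum_congr rfl fun i _ => ?_
    rw [hK, real_inner_comm, mul_comm]
  have hnorm : ‖g‖ ^ 2 = y ⬝ᵥ c := by
    rw [← real_inner_self_eq_norm_sq]
    nth_rewrite 2 [hg]
    rw [inner_sum]
    simp only [dotProduct, real_inner_smul_right, hgφ]
    exact Finset.sum_congr rfl fun i _ => mul_comm _ _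
  have hΛg : Λstar = ‖g‖ := by
    rw [hΛstar, ← hnorm, Real.sqrt_sq (norm_nonneg _)]
  have hpos : 0 < Λstar := by
    rw [hΛg, norm_pos_iff]
    intro h0
    apply hy
    funext j
    rw [← hgφ j, h0, inner_zero_left]
    rfl
  refine ⟨hpos, fun Λ h0 _ => ?_⟩
  have hex : ∃ h : H, ‖h‖ ≤ Λ ∧
        (1 / N : ℝ) * ∑ j, (⟪h, φ j⟫ - y j) ^ 2
          = (1 - Λ / Λstar) ^ 2 * ((1 / N : ℝ) * ∑ j, (y j) ^ 2) := by
    refine ⟨(Λ / Λstar) • g, ?_, ?_⟩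
    · rw [norm_smul, ← hΛg, Real.norm_of_nonneg (div_nonneg h0 hpos.le),
        div_mul_cancel₀ _ hpos.ne']
    · simp only [real_inner_smul_left, hgφ]
      rw [mul_left_comm, Finset.mul_sum (a := (1 - Λ / Λstar) ^ 2)]
      congr 1
      exact Finset.sum_congr rfl fun i _ => by ring
  refine ⟨hex, ?_⟩
  obtain ⟨h, hh, he⟩ := hex
  refine csInf_le ⟨0, ?_⟩ ⟨h, hh, he.symm⟩
  rintro r ⟨h', _, rfl⟩
  positivity
end
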